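/- Let Λ > 0 and let λ : (0, π/√Λ) → ℝ be a differentiable function satisfying the differential inequality λ'(s) ≥ −Λ − λ(s)² for all s ∈ (0, π/√Λ), and the asymptotic condition s·λ(s) → 1 as s → 0⁺. Then λ(s) ≥ √Λ · cos(√Λ s)/sin(√Λ s) for all s ∈ (0, π/√Λ). -/

import Mathlib

/-!
Write `k = √Λ` and `r(s) = sin (k s) λ(s) - k cos (k s)`. The claim is `r ≥ 0`, and the condition
`s λ(s) → 1` says exactly that `r → 0` at `0⁺`, so `r` extends continuously by `r(0) = 0`.

Suppose `r(s₀) < 0`, and let `b ∈ [0, s₀)` be the last point where the extended function is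
nonnegative, so that `r < 0` on `(b, s₀]`. There the Riccati inequality says precisely that
`h = -1 / (sin (k s) r) - cos (k s) / (k sin (k s))` is nondecreasing: with `g = sin (k s) r` one
has `g' + r² = sin² (k s) (λ' + k² + λ²) ≥ 0`, hence `h' = g' / g² + 1 / sin² (k s) ≥ 0`
(`riccati_monotoneOn`). From `h ≤ h(s₀)` it follows that `1 ≤ -r(s) M` on `(b, s₀]` for a constant
`M`; letting `s → b⁺` gives `1 ≤ -r(b) M ≤ 0`, a contradiction. Treating `b = 0` and `b > 0`
alike is what the choice of `r`, rather than `λ - k cot (k s)`, makes possible.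
-/

open Real

/-- The Riccati inequality in linearised form: where `r = sin (k s) λ - k cos (k s)` does not
vanish, it makes `-1 / (sin (k s) r) - cot (k s) / k` nondecreasing. -/
lemma riccati_monotoneOn {k b c : ℝ} (hk : 0 < k) {lam : ℝ → ℝ}
    (hdiff : ∀ s ∈ Set.Ioc b c, DifferentiableAt ℝ lam s)
    (hineq : ∀ s ∈ Set.Ioc b c, -k ^ 2 - (lam s) ^ 2 ≤ deriv lam s)
    (hsin : ∀ s ∈ Set.Ioc b c, 0 < sin (k * s))
    (hr : ∀ s ∈ Set.Ioc b c, sin (k * s) * lam s - k * cos (k * s) ≠ 0) :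
    MonotoneOn (fun s => -(sin (k * s) * (sin (k * s) * lam s - k * cos (k * s)))⁻¹
      - cos (k * s) / (k * sin (k * s))) (Set.Ioc b c) := by
  have hd : ∀ s ∈ Set.Ioc b c, HasDerivAt
      (fun s => -(sin (k * s) * (sin (k * s) * lam s - k * cos (k * s)))⁻¹
        - cos (k * s) / (k * sin (k * s)))
      ((deriv lam s + k ^ 2 + lam s ^ 2) / (sin (k * s) * lam s - k * cos (k * s)) ^ 2) s := by
    intro s hs
    have hS := (hsin s hs).ne'
    have hR := hr s hs
    have hlin : HasDerivAt (fun s : ℝ => k * s) k s := by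
      simpa using (hasDerivAt_id s).const_mul k
    have hsn := hlin.sin
    have hcs := hlin.cos
    have hg := hsn.mul ((hsn.mul (hdiff s hs).hasDerivAt).sub (hcs.const_mul k))
    have hh := (hg.inv (mul_ne_zero hS hR)).neg.sub
      (hcs.div (hsn.const_mul k) (mul_ne_zero hk.ne' hS))
    refine hh.congr_deriv ?_
    simp only [Pi.mul_apply, Pi.sub_apply]
    have hC : cos (k * s) ^ 2 = 1 - sin (k * s) ^ 2 := cos_sq' _
    generalize sin (k * s) = S at *
    generalize cos (k * s) = C at *
    generalize lam s = L at *
    generalize deriv lam s = D at *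
    -- the derivative of `-cot (k s) / k` is `1 / sin² (k s)`
    have e1 : (-S * k * (k * S) - C * (k * (C * k))) / (k * S) ^ 2 = -1 / S ^ 2 := by
      field_simp
      linear_combination -hC
    rw [e1]
    generalize hρ : S * L - k * C = ρ at hR ⊢
    field_simp
    rw [← hρ]
    ring
  refine monotoneOn_of_deriv_nonneg (convex_Ioc b c)
    (fun s hs => (hd s hs).continuousAt.continuousWithinAt)
    (fun s hs => (hd s (interior_subset hs)).differentiableAt.differentiableWithinAt)
    (fun s hs => ?_)
  rw [(hd s (interior_subset hs)).deriv]
  have := hineq s (interior_subset hs)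
  exact div_nonneg (by linarith) (sq_nonneg _)

/-- The asymptotics `s λ(s) → 1` in terms of `r = sin (k s) λ - k cos (k s)`. -/
lemma tendsto_sin_mul_sub_zero (k : ℝ) {lam : ℝ → ℝ}
    (hasym : Filter.Tendsto (fun s => s * lam s) (nhdsWithin 0 (Set.Ioi 0)) (nhds 1)) :
    Filter.Tendsto (fun s => sin (k * s) * lam s - k * cos (k * s))
      (nhdsWithin 0 (Set.Ioi 0)) (nhds 0) := by
  have hlin : HasDerivAt (fun s : ℝ => k * s) k 0 := by
    simpa using (hasDerivAt_id (0 : ℝ)).const_mul k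
  have h1 : Filter.Tendsto (fun s => s⁻¹ * sin (k * s)) (nhdsWithin 0 (Set.Ioi 0)) (nhds k) := by
    simpa using hlin.sin.tendsto_slope_zero_right
  have h2 : Filter.Tendsto (fun s => k * cos (k * s)) (nhdsWithin 0 (Set.Ioi 0)) (nhds k) := by
    have : Continuous fun s => k * cos (k * s) := by fun_prop
    simpa using (this.tendsto 0).mono_left nhdsWithin_le_nhds
  have h3 := (h1.mul hasym).sub h2
  rw [mul_one, sub_self] at h3
  refine h3.congr' ?_
  filter_upwards [self_mem_nhdsWithin] with s hs
  have : s ≠ 0 := (Set.mem_Ioi.1 hs).ne'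
  field_simp

/-- **Riccati comparison (lower bound).** Let `Λ > 0` and let
`λ : (0, π/√Λ) → ℝ` be differentiable with `λ'(s) ≥ −Λ − λ(s)²` on `(0, π/√Λ)` and
`s·λ(s) → 1` as `s → 0⁺`. Then `λ(s) ≥ √Λ · cos(√Λ s)/sin(√Λ s)` on `(0, π/√Λ)`. -/
theorem riccati_comparison_lower (Λ : ℝ) (hΛ : 0 < Λ) (lam : ℝ → ℝ)
    (hdiff : ∀ s ∈ Set.Ioo (0 : ℝ) (π / Real.sqrt Λ), DifferentiableAt ℝ lam s)
    (hineq : ∀ s ∈ Set.Ioo (0 : ℝ) (π / Real.sqrt Λ), -Λ - (lam s) ^ 2 ≤ deriv lam s)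
    (hasym : Filter.Tendsto (fun s => s * lam s) (nhdsWithin 0 (Set.Ioi 0)) (nhds 1)) :
    ∀ s ∈ Set.Ioo (0 : ℝ) (π / Real.sqrt Λ),
      Real.sqrt Λ * (Real.cos (Real.sqrt Λ * s) / Real.sin (Real.sqrt Λ * s)) ≤ lam s := by
  intro s₀ hs₀
  set k := Real.sqrt Λ with hkdef
  have hk : 0 < k := Real.sqrt_pos.2 hΛ
  have hk2 : k ^ 2 = Λ := Real.sq_sqrt hΛ.le
  have hsin : ∀ s ∈ Set.Ioo (0 : ℝ) (π / k), 0 < sin (k * s) := fun s hs =>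
    sin_pos_of_pos_of_lt_pi (mul_pos hk hs.1) (by
      have := (lt_div_iff₀ hk).1 hs.2
      linarith)
  set r : ℝ → ℝ := fun s => sin (k * s) * lam s - k * cos (k * s) with hrdef
  suffices hmain : 0 ≤ r s₀ by
    rw [← mul_div_assoc, div_le_iff₀ (hsin s₀ hs₀)]
    simp only [hrdef] at hmain
    linarith
  by_contra! hneg
  -- `r` itself takes the value `-k` at `0`, so its continuous extension has to be imposed.
  set R : ℝ → ℝ := Function.update r 0 0 with hRdef
  have hRr : ∀ s, 0 < s → R s = r s := fun s hs => Function.update_of_ne hs.ne' _ _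
  have hR0 : R 0 = 0 := Function.update_self _ _ _
  have hright : ∀ s, 0 ≤ s → R =ᶠ[nhdsWithin s (Set.Ioi s)] r := fun s hs => by
    filter_upwards [self_mem_nhdsWithin] with x hx
    exact hRr x (hs.trans_lt hx)
  have hrcont : ∀ s ∈ Set.Ioo (0 : ℝ) (π / k), ContinuousAt r s := by
    intro s hs
    have := (hdiff s hs).continuousAt
    simp only [hrdef]
    fun_prop
  have hRcont : ContinuousOn R (Set.Icc 0 s₀) := by
    intro s hs
    rcases hs.1.eq_or_lt with rfl | h0
    · have : ContinuousWithinAt R (Set.Ioi 0) 0 := by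
        rw [ContinuousWithinAt, hR0]
        exact (tendsto_sin_mul_sub_zero k hasym).congr' (hright 0 le_rfl).symm
      exact (continuousWithinAt_Ioi_iff_Ici.1 this).mono Set.Icc_subset_Ici_self
    · refine ((hrcont s ⟨h0, hs.2.trans_lt hs₀.2⟩).congr ?_).continuousWithinAt
      filter_upwards [lt_mem_nhds h0] with x hx
      exact (hRr x hx).symm
  -- `b` is the last point of `[0, s₀]` at which `R` is nonnegative.
  obtain ⟨b, ⟨hb, hRb⟩, hbmax⟩ :=
    (isCompact_Icc.of_isClosed_subset
      (hRcont.preimage_isClosed_of_isClosed isClosed_Icc isClosed_Ici)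
      Set.inter_subset_left).exists_isGreatest
      (⟨0, ⟨le_rfl, hs₀.1.le⟩, hR0.ge⟩ : (Set.Icc 0 s₀ ∩ R ⁻¹' Set.Ici 0).Nonempty)
  replace hRb : 0 ≤ R b := hRb
  have hbs : b < s₀ := hb.2.lt_of_ne (by
    rintro rfl
    rw [hRr _ hs₀.1] at hRb
    linarith)
  have hsub : ∀ s ∈ Set.Ioc b s₀, s ∈ Set.Ioo (0 : ℝ) (π / k) := fun s hs =>
    ⟨hb.1.trans_lt hs.1, hs.2.trans_lt hs₀.2⟩
  have hrneg : ∀ s ∈ Set.Ioc b s₀, r s < 0 := by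
    intro s hs
    by_contra! h
    rw [← hRr s (hsub s hs).1] at h
    exact absurd (hbmax ⟨⟨(hsub s hs).1.le, hs.2⟩, h⟩) (not_le.2 hs.1)
  have hmono := riccati_monotoneOn hk (fun s hs => hdiff s (hsub s hs))
    (fun s hs => hk2 ▸ hineq s (hsub s hs)) (fun s hs => hsin s (hsub s hs))
    (fun s hs => (hrneg s hs).ne)
  obtain ⟨K, hK⟩ : ∃ K, ∀ s ∈ Set.Ioc b s₀,
      -(sin (k * s) * r s)⁻¹ - cos (k * s) / (k * sin (k * s)) ≤ K :=
    ⟨_, fun s hs => hmono hs ⟨hbs, le_rfl⟩ hs.2⟩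
  have hbound : ∀ s ∈ Set.Ioc b s₀, 1 ≤ -r s * (|K| + 1 / k) := by
    intro s hs
    have hS := hsin s (hsub s hs)
    have hr := hrneg s hs
    have h1 : 1 ≤ -r s * (sin (k * s) * K + cos (k * s) / k) := by
      have h := mul_le_mul_of_nonneg_left (hK s hs) (mul_pos hS (neg_pos.2 hr)).le
      have hS' := hS.ne'
      have hr' := hr.ne
      have e : sin (k * s) * -r s * (-(sin (k * s) * r s)⁻¹ - cos (k * s) / (k * sin (k * s)))
          = 1 + r s * (cos (k * s) / k) := by
        field_simp
        ring
      rw [e] at h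
      linarith
    refine h1.trans (mul_le_mul_of_nonneg_left (add_le_add ?_ ?_) (neg_pos.2 hr).le)
    · calc sin (k * s) * K ≤ sin (k * s) * |K| := mul_le_mul_of_nonneg_left (le_abs_self K) hS.le
        _ ≤ 1 * |K| := mul_le_mul_of_nonneg_right (sin_le_one _) (abs_nonneg K)
        _ = |K| := one_mul _
    · exact div_le_div_of_nonneg_right (cos_le_one _) hk.le
  have hlim : Filter.Tendsto R (nhdsWithin b (Set.Ioc b s₀)) (nhds (R b)) :=
    (hRcont b hb).mono fun s hs => ⟨(hsub s hs).1.le, hs.2⟩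
  have : (nhdsWithin b (Set.Ioc b s₀)).NeBot := by
    rw [nhdsWithin_Ioc_eq_nhdsGT hbs]
    infer_instance
  have hle : 1 ≤ -R b * (|K| + 1 / k) := by
    refine ge_of_tendsto (hlim.neg.mul_const _) ?_
    filter_upwards [self_mem_nhdsWithin] with s hs
    rw [hRr s (hsub s hs).1]
    exact hbound s hs
  have hM : 0 ≤ |K| + 1 / k := by positivity
  linarith [mul_nonneg hRb hM]
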